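/- Let A′ and B′ be tuples of complex numbers and α̂, β̂ complex numbers, all of whose real parts have absolute value less than 1/4, and let p be a prime. Then Σ_{r≥0} [ τ_{B′}(p^r) τ_{A′∪{−β̂}}(p^r) + τ_{A′}(p^r) τ_{B′∪{−α̂}}(p^r) − τ_{A′}(p^r) τ_{B′}(p^r) ] p^{−r} = (1 − p^{−1+α̂+β̂}) Σ_{r≥0} τ_{A′∪{−β̂}}(p^r) τ_{B′∪{−α̂}}(p^r) p^{−r}, both series converging absolutely. -/

import Mathlib

open Complex

/-- Shifted divisor function: `tauSh A n = ∑_{n₁⋯n_k = n} n₁^{-α₁}⋯n_k^{-α_k}`,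
defined by iterated Dirichlet convolution. -/
noncomputable def tauSh : List ℂ → ℕ → ℂ
  | [], n => if n = 1 then 1 else 0
  | a :: A, n => ∑ d ∈ n.divisors, (d : ℂ) ^ (-a) * tauSh A (n / d)

/-- `g_A(s,q) = ∏_{p ∣ q} ( ∏_{α∈A} (1 − p^{−s−α}) · ∑_{j≥0} τ_A(p^{j+q_p}) p^{−js} )`. -/
noncomputable def gSh (A : List ℂ) (s : ℂ) (q : ℕ) : ℂ :=
  ∏ p ∈ q.primeFactors,
    ((A.map (fun α => 1 - (p : ℂ) ^ (-s - α))).prod *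
      ∑' j : ℕ, tauSh A (p ^ (j + q.factorization p)) * (p : ℂ) ^ (-(j : ℂ) * s))

/-- `G_A(s,q) = ∑_{d∣q} (μ(d)/φ(d)) d^s ∑_{e∣d} (μ(e)/e^s) g_A(s, qe/d)`. -/
noncomputable def GSh (A : List ℂ) (s : ℂ) (q : ℕ) : ℂ :=
  ∑ d ∈ q.divisors, ((ArithmeticFunction.moebius d : ℂ) / (Nat.totient d : ℂ)) * (d : ℂ) ^ s *
    ∑ e ∈ d.divisors, (ArithmeticFunction.moebius e : ℂ) / (e : ℂ) ^ s * gSh A s (q * e / d)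

/-!
Writing `u = τ_{A′∪{−β̂}}`, `a = τ_{A′}`, `v = τ_{B′∪{−α̂}}`, `b = τ_{B′}` at the powers of `p`, the
bracket on the left is `b u + a v − a b = u v − (u − a) (v − b)`. Since adjoining `γ` to a tuple
convolves with the geometric sequence of ratio `p^{−γ}`, the differences `u − a` and `v − b` are
`p^β̂` times `u` and `p^α̂` times `v`, both shifted by one place, so the subtracted series is
`p^{−1+α̂+β̂}` times the series of `u v`.
-/

section PowerSeriesIdentity

variable {R : Type*} [CommRing R] [TopologicalSpace R] [IsTopologicalRing R]

lemma hasSum_mul_add_mul_sub_mul_of_recurrence {a b u v : ℕ → R} {x y t S : R}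
    (hu₀ : u 0 = a 0) (hu : ∀ r, u (r + 1) = a (r + 1) + x * u r)
    (hv : ∀ r, v (r + 1) = b (r + 1) + y * v r)
    (hS : HasSum (fun r ↦ u r * v r * t ^ r) S) :
    HasSum (fun r ↦ (b r * u r + a r * v r - a r * b r) * t ^ r) ((1 - x * y * t) * S) := by
  have hshift : HasSum (fun r ↦ (u r - a r) * (v r - b r) * t ^ r) (x * y * t * S) := by
    have hterm (r : ℕ) : (u (r + 1) - a (r + 1)) * (v (r + 1) - b (r + 1)) * t ^ (r + 1) =
        x * y * t * (u r * v r * t ^ r) := by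
      rw [hu, hv]
      ring
    rw [← hasSum_nat_add_iff' 1]
    simpa only [hterm, Finset.sum_range_one, hu₀, sub_self, zero_mul, sub_zero]
      using hS.mul_left (x * y * t)
  have hterm (r : ℕ) : (b r * u r + a r * v r - a r * b r) * t ^ r =
      u r * v r * t ^ r - (u r - a r) * (v r - b r) * t ^ r := by
    ring
  simpa only [hterm, one_sub_mul] using hS.sub hshift

end PowerSeriesIdentity

section Permutation

/-- The arithmetic function `n ↦ n^{-a}`, set to `0` at `n = 0`. Its Dirichlet products over a tuple
are the shifted divisor functions. -/
noncomputable def cpowNeg (a : ℂ) : ArithmeticFunction ℂ :=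
  ⟨fun n ↦ if n = 0 then 0 else (n : ℂ) ^ (-a), if_pos rfl⟩

lemma cpowNeg_apply {a : ℂ} {n : ℕ} (hn : n ≠ 0) : cpowNeg a n = (n : ℂ) ^ (-a) :=
  if_neg hn

lemma prod_map_cpowNeg_apply (A : List ℂ) (n : ℕ) : (A.map cpowNeg).prod n = tauSh A n := by
  induction A generalizing n with
  | nil => simp [tauSh, ArithmeticFunction.one_apply]
  | cons a A ih =>
    rw [List.map_cons, List.prod_cons, ArithmeticFunction.mul_apply,
      Nat.sum_divisorsAntidiagonal (fun d e ↦ cpowNeg a d * (A.map cpowNeg).prod e), tauSh]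
    refine Finset.sum_congr rfl fun d hd ↦ ?_
    rw [cpowNeg_apply (Nat.pos_of_mem_divisors hd).ne', ih]

lemma tauSh_perm {A B : List ℂ} (h : A.Perm B) (n : ℕ) : tauSh A n = tauSh B n := by
  rw [← prod_map_cpowNeg_apply, ← prod_map_cpowNeg_apply, (h.map cpowNeg).prod_eq]

end Permutation

lemma tauSh_one (A : List ℂ) : tauSh A 1 = 1 := by
  induction A with
  | nil => simp [tauSh]
  | cons a A ih => simp [tauSh, ih]

section PrimePowers

variable {p : ℕ}

lemma tauSh_cons_prime_pow (hp : p.Prime) (a : ℂ) (A : List ℂ) (n : ℕ) :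
    tauSh (a :: A) (p ^ n) =
      ∑ ij ∈ Finset.HasAntidiagonal.antidiagonal n,
        ((p : ℂ) ^ (-a)) ^ ij.1 * tauSh A (p ^ ij.2) := by
  rw [tauSh, Nat.sum_divisors_prime_pow hp, Finset.Nat.sum_antidiagonal_eq_sum_range_succ_mk]
  refine Finset.sum_congr rfl fun k hk ↦ ?_
  rw [Nat.pow_div (Finset.mem_range_succ_iff.mp hk) hp.pos, Nat.cast_pow,
    ← natCast_cpow_natCast_mul, cpow_nat_mul]

lemma tauSh_cons_prime_pow_succ (hp : p.Prime) (a : ℂ) (A : List ℂ) (n : ℕ) :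
    tauSh (a :: A) (p ^ (n + 1)) =
      tauSh A (p ^ (n + 1)) + (p : ℂ) ^ (-a) * tauSh (a :: A) (p ^ n) := by
  rw [tauSh_cons_prime_pow hp, tauSh_cons_prime_pow hp, Finset.Nat.sum_antidiagonal_succ,
    pow_zero, one_mul, Finset.mul_sum]
  simp only [pow_succ', mul_assoc]

lemma tauSh_append_singleton_prime_pow_succ (hp : p.Prime) (A : List ℂ) (c : ℂ) (n : ℕ) :
    tauSh (A ++ [c]) (p ^ (n + 1)) =
      tauSh A (p ^ (n + 1)) + (p : ℂ) ^ (-c) * tauSh (A ++ [c]) (p ^ n) := by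
  simp only [tauSh_perm (List.perm_append_singleton c A), tauSh_cons_prime_pow_succ hp]

lemma summable_norm_tauSh_prime_pow_mul_pow (hp : p.Prime) {A : List ℂ} {z : ℂ}
    (hz : ∀ a ∈ A, ‖(p : ℂ) ^ (-a) * z‖ < 1) :
    Summable fun n : ℕ ↦ ‖tauSh A (p ^ n) * z ^ n‖ := by
  induction A with
  | nil =>
    refine summable_of_ne_finset_zero (s := {0}) fun n hn ↦ ?_
    have hn : n ≠ 0 := by simpa using hn
    simp [tauSh, hp.ne_one, hn]
  | cons a A ih =>
    obtain ⟨ha, hA⟩ := List.forall_mem_cons.mp hz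
    have hgeom : Summable fun n : ℕ ↦ ‖((p : ℂ) ^ (-a) * z) ^ n‖ := by
      simpa only [norm_pow] using summable_geometric_of_lt_one (norm_nonneg _) ha
    refine (summable_norm_sum_mul_antidiagonal_of_summable_norm hgeom (ih hA)).congr fun n ↦ ?_
    rw [tauSh_cons_prime_pow hp, Finset.sum_mul]
    congr 1
    refine Finset.sum_congr rfl fun ij hij ↦ ?_
    rw [← Finset.HasAntidiagonal.mem_antidiagonal.mp hij]
    ring

lemma norm_natCast_cpow_neg_mul_cpow_lt_one (hp : 1 < p) {a s : ℂ} (h : s.re < a.re) :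
    ‖(p : ℂ) ^ (-a) * (p : ℂ) ^ s‖ < 1 := by
  rw [← cpow_add _ _ (by exact_mod_cast (zero_lt_one.trans hp).ne'),
    norm_natCast_cpow_of_pos (zero_lt_one.trans hp)]
  refine Real.rpow_lt_one_of_one_lt_of_neg (by exact_mod_cast hp) ?_
  simpa using h

lemma summable_norm_tauSh_mul_tauSh_prime_pow (hp : p.Prime) {A B : List ℂ}
    (h : ∀ a ∈ A, ∀ b ∈ B, -1 < a.re + b.re) :
    Summable fun n : ℕ ↦ ‖tauSh A (p ^ n) * tauSh B (p ^ n) * (p : ℂ)⁻¹ ^ n‖ := by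
  -- Split `p⁻¹ = p^σ p^{−1−σ}` so that each factor alone makes one of the two series converge.
  obtain ⟨σ, hσB, hσA⟩ : ∃ σ : ℝ, (∀ b ∈ B, -1 - b.re < σ) ∧ ∀ a ∈ A, σ < a.re := by
    classical
    have hsep := Order.exists_between_finsets (lo := (B.map fun b ↦ -1 - b.re).toFinset)
      (hi := (A.map re).toFinset)
    simp only [List.mem_toFinset, List.forall_mem_map] at hsep
    exact hsep fun b hb a ha ↦ by linarith [h a ha b hb]
  have hsplit : (p : ℂ)⁻¹ = (p : ℂ) ^ (σ : ℂ) * (p : ℂ) ^ (-1 - σ : ℂ) := by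
    rw [← cpow_add _ _ (by exact_mod_cast hp.ne_zero), add_sub_cancel, cpow_neg_one]
  have hA : Summable fun n : ℕ ↦ ‖tauSh A (p ^ n) * ((p : ℂ) ^ (σ : ℂ)) ^ n‖ :=
    summable_norm_tauSh_prime_pow_mul_pow hp fun a ha ↦
      norm_natCast_cpow_neg_mul_cpow_lt_one hp.one_lt (hσA a ha)
  have hB : Summable fun n : ℕ ↦ ‖tauSh B (p ^ n) * ((p : ℂ) ^ (-1 - σ : ℂ)) ^ n‖ :=
    summable_norm_tauSh_prime_pow_mul_pow hp fun b hb ↦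
      norm_natCast_cpow_neg_mul_cpow_lt_one hp.one_lt (by simpa using by linarith [hσB b hb])
  refine ((hA.mul_norm hB).comp_injective Function.diag_injective).congr fun n ↦ ?_
  rw [hsplit, mul_pow, mul_mul_mul_comm]
  rfl

end PrimePowers

theorem stmt13_general (A' B' : List ℂ) (αh βh : ℂ)
    (h : ∀ a ∈ A' ++ [-βh], ∀ b ∈ B' ++ [-αh], -1 < a.re + b.re) (p : ℕ) (hp : p.Prime) :
    Summable (fun r : ℕ =>
      ‖(tauSh B' (p ^ r) * tauSh (A' ++ [-βh]) (p ^ r)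
          + tauSh A' (p ^ r) * tauSh (B' ++ [-αh]) (p ^ r)
          - tauSh A' (p ^ r) * tauSh B' (p ^ r)) / (p : ℂ) ^ r‖) ∧
    Summable (fun r : ℕ =>
      ‖tauSh (A' ++ [-βh]) (p ^ r) * tauSh (B' ++ [-αh]) (p ^ r) / (p : ℂ) ^ r‖) ∧
    ∑' r : ℕ, (tauSh B' (p ^ r) * tauSh (A' ++ [-βh]) (p ^ r)
          + tauSh A' (p ^ r) * tauSh (B' ++ [-αh]) (p ^ r)
          - tauSh A' (p ^ r) * tauSh B' (p ^ r)) / (p : ℂ) ^ r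
      = (1 - (p : ℂ) ^ (-1 + αh + βh)) *
          ∑' r : ℕ, tauSh (A' ++ [-βh]) (p ^ r) * tauSh (B' ++ [-αh]) (p ^ r) / (p : ℂ) ^ r := by
  have hsum := summable_norm_tauSh_mul_tauSh_prime_pow hp h
  have hfactor : (p : ℂ) ^ (-1 + αh + βh) =
      (p : ℂ) ^ (-(-βh)) * (p : ℂ) ^ (-(-αh)) * (p : ℂ)⁻¹ := by
    have hp₀ : (p : ℂ) ≠ 0 := by exact_mod_cast hp.ne_zero
    rw [cpow_add _ _ hp₀, cpow_add _ _ hp₀, cpow_neg_one, neg_neg, neg_neg]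
    ring
  have hidentity := hasSum_mul_add_mul_sub_mul_of_recurrence
    (a := fun r ↦ tauSh A' (p ^ r)) (b := fun r ↦ tauSh B' (p ^ r))
    (u := fun r ↦ tauSh (A' ++ [-βh]) (p ^ r)) (v := fun r ↦ tauSh (B' ++ [-αh]) (p ^ r))
    (by simp only [pow_zero, tauSh_one])
    (tauSh_append_singleton_prime_pow_succ hp A' (-βh))
    (tauSh_append_singleton_prime_pow_succ hp B' (-αh)) hsum.of_norm.hasSum
  simp only [div_eq_mul_inv, ← inv_pow, hfactor]
  exact ⟨hidentity.summable.norm, hsum, hidentity.tsum_eq⟩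

/-- For tuples A′, B′ and numbers α̂, β̂, all real parts of absolute
value < 1/4, and a prime p,
Σ_{r≥0} [ τ_{B′}τ_{A′∪{−β̂}} + τ_{A′}τ_{B′∪{−α̂}} − τ_{A′}τ_{B′} ](p^r) p^{−r}
  = (1 − p^{−1+α̂+β̂}) Σ_{r≥0} τ_{A′∪{−β̂}}(p^r) τ_{B′∪{−α̂}}(p^r) p^{−r},
both series converging absolutely. -/
theorem stmt13 (A' B' : List ℂ) (αh βh : ℂ)
    (hA : ∀ α ∈ A', |α.re| < 1/4) (hB : ∀ β ∈ B', |β.re| < 1/4)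
    (hα : |αh.re| < 1/4) (hβ : |βh.re| < 1/4) (p : ℕ) (hp : p.Prime) :
    Summable (fun r : ℕ =>
      ‖(tauSh B' (p ^ r) * tauSh (A' ++ [-βh]) (p ^ r)
          + tauSh A' (p ^ r) * tauSh (B' ++ [-αh]) (p ^ r)
          - tauSh A' (p ^ r) * tauSh B' (p ^ r)) / (p : ℂ) ^ r‖) ∧
    Summable (fun r : ℕ =>
      ‖tauSh (A' ++ [-βh]) (p ^ r) * tauSh (B' ++ [-αh]) (p ^ r) / (p : ℂ) ^ r‖) ∧
    ∑' r : ℕ, (tauSh B' (p ^ r) * tauSh (A' ++ [-βh]) (p ^ r)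
          + tauSh A' (p ^ r) * tauSh (B' ++ [-αh]) (p ^ r)
          - tauSh A' (p ^ r) * tauSh B' (p ^ r)) / (p : ℂ) ^ r
      = (1 - (p : ℂ) ^ (-1 + αh + βh)) *
          ∑' r : ℕ, tauSh (A' ++ [-βh]) (p ^ r) * tauSh (B' ++ [-αh]) (p ^ r) / (p : ℂ) ^ r := by
  have hA' : ∀ a ∈ A' ++ [-βh], |a.re| < 1 / 4 :=
    List.forall_mem_append.mpr ⟨hA, by simpa using hβ⟩
  have hB' : ∀ b ∈ B' ++ [-αh], |b.re| < 1 / 4 :=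
    List.forall_mem_append.mpr ⟨hB, by simpa using hα⟩
  exact stmt13_general A' B' αh βh (fun a ha b hb ↦ by
    linarith [neg_lt_of_abs_lt (hA' a ha), neg_lt_of_abs_lt (hB' b hb)]) p hp
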